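/- Fix integers K ≥ 2, N ≥ 1, t ≥ 1, a user i ∈ Fin K, and set S := (Fin K) \ {i}. Let d : Fin K → Fin N be a demand vector, let V be a vector space over GF(2), and for each file q ∈ Fin N and each (t+1)-element subset C ⊆ Fin K with i ∈ C let W_{q,C} ∈ V be an arbitrary vector. For each t-element subset A ⊆ S define the codeword Y_A := Σ_{k ∈ A} W_{d(k), (A ∪ {i}) \ {k}} (sum in V). Let U ⊆ S be a set of leading demanders, i.e., d is injective on U and d(U) = d(S). Then for every t-element subset A ⊆ S with A ∩ U = ∅, the vector Y_A lies in the GF(2)-linear span of the set {Y_{A'} : A' ⊆ S, |A'| = t, A' ∩ U ≠ ∅}. -/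

import Mathlib

/-!
Put `B = A ∪ U` and sum the codewords of `B \ X` over all sets `X` of leading demanders of `B`.
A term is indexed by such an `X` and a user `k ∈ B \ X`, and there is exactly one `v ∈ X` demanding
the same file as `k`. Exchanging `k` and `v` gives another set of leading demanders and a term
involving the same sub-piece, so the terms cancel in pairs over GF(2). The summand for `X = U` is
the codeword of `A`, and every other `B \ X` meets `U`, because no set of leading demanders contains
another.
-/

open Finset

section

variable {α β V : Type*}

/-- `X` is a set of leading demanders of `B`: it contains exactly one user of `B` for each file
demanded in `B`, where `d` sends a user to the file it demands. -/
structure IsLeadingSet (d : α → β) (B X : Finset α) : Prop where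
  subset : X ⊆ B
  bijOn : Set.BijOn d X (d '' B)

namespace IsLeadingSet

variable {d : α → β} {B X Y : Finset α}

theorem of_subset_of_subset (hX : IsLeadingSet d B X) (hXY : X ⊆ Y) (hYB : Y ⊆ B) :
    IsLeadingSet d Y X where
  subset := hXY
  bijOn := by
    have himage : d '' Y = d '' B :=
      (Set.image_mono (coe_subset.2 hYB)).antisymm
        (hX.bijOn.image_eq ▸ Set.image_mono (coe_subset.2 hXY))
    exact himage ▸ hX.bijOn

theorem existsUnique_mem (hX : IsLeadingSet d B X) {k : α} (hk : k ∈ B) :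
    ∃! v, v ∈ X ∧ d v = d k := by
  obtain ⟨v, hv, hvk⟩ := hX.bijOn.surjOn (Set.mem_image_of_mem d (mem_coe.2 hk))
  exact ⟨v, ⟨hv, hvk⟩, fun w hw => hX.bijOn.injOn hw.1 hv (hw.2.trans hvk.symm)⟩

theorem exchange [DecidableEq α] (hX : IsLeadingSet d B X) {k v : α} (hk : k ∈ B) (hv : v ∈ X)
    (hvk : d v = d k) : IsLeadingSet d B (insert k (X.erase v)) where
  subset := insert_subset hk ((erase_subset v X).trans hX.subset)
  bijOn := by
    have hdk : d k ∈ d '' B := Set.mem_image_of_mem d (mem_coe.2 hk)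
    have hinsert := (hX.bijOn.sdiff_singleton (mem_coe.2 hv)).insert (a := k) (by simp [hvk])
    rwa [hvk, Set.insert_sdiff_singleton, Set.insert_eq_of_mem hdk, ← coe_erase,
      ← coe_insert] at hinsert

theorem card_eq (hX : IsLeadingSet d B X) (hY : IsLeadingSet d B Y) : #X = #Y := by
  classical
  rw [← card_image_of_injOn hX.bijOn.injOn, ← card_image_of_injOn hY.bijOn.injOn]
  congr 1
  exact_mod_cast hX.bijOn.image_eq.trans hY.bijOn.image_eq.symm

theorem sdiff_inter_nonempty [DecidableEq α] (hX : IsLeadingSet d B X) (hY : IsLeadingSet d B Y)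
    (hne : X ≠ Y) : ((B \ X) ∩ Y).Nonempty := by
  have hYX : ¬ Y ⊆ X := fun h => hne (eq_of_subset_of_card_le h (hX.card_eq hY).le).symm
  obtain ⟨y, hyY, hyX⟩ := not_subset.1 hYX
  exact ⟨y, mem_inter.2 ⟨mem_sdiff.2 ⟨hY.subset hyY, hyX⟩, hyY⟩⟩

end IsLeadingSet

/-- The codeword `Y_A` sent by user `i`, where `W q C` is the sub-piece of file `q` cached by
exactly the users in `C`. -/
def codeword [DecidableEq α] [AddCommMonoid V] (i : α) (d : α → β) (W : β → Finset α → V)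
    (A : Finset α) : V :=
  ∑ k ∈ A, W (d k) (insert i A \ {k})

variable [DecidableEq α] [AddCommGroup V] [Module (ZMod 2) V]

theorem sum_isLeadingSet_sum_insert_eq_zero (d : α → β) (g : β → Finset α → V) (B : Finset α)
    [DecidablePred (IsLeadingSet d B)] :
    ∑ X ∈ B.powerset with IsLeadingSet d B X, ∑ k ∈ B \ X, g (d k) (insert k X) = 0 := by
  classical
  have hleader : ∀ X ∈ B.powerset.filter (IsLeadingSet d B), ∀ k ∈ B \ X,
      g (d k) (insert k X) = ∑ v ∈ X with d v = d k, g (d k) (insert k X) := by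
    intro X hX k hk
    have hcard : #{v ∈ X | d v = d k} = 1 := by
      simpa only [card_eq_one_iff_existsUnique, mem_filter] using
        (mem_filter.1 hX).2.existsUnique_mem (mem_sdiff.1 hk).1
    rw [sum_const, hcard, one_smul]
  rw [sum_congr rfl fun X hX => sum_congr rfl (hleader X hX), sum_sigma', sum_sigma']
  refine sum_involution (fun p _ => ⟨⟨insert p.1.2 (p.1.1.erase p.2), p.2⟩, p.1.2⟩) ?_ ?_ ?_ ?_ <;>
    rintro ⟨⟨X, k⟩, v⟩ hp <;>
    simp only [mem_sigma, mem_filter, mem_powerset, mem_sdiff] at hp <;>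
    obtain ⟨⟨⟨hXB, hX⟩, hkB, hkX⟩, hvX, hvk⟩ := hp
  · have hinsert : insert v (insert k (X.erase v)) = insert k X := by
      rw [insert_comm, insert_erase hvX]
    simp only [hinsert, hvk, ZModModule.add_self]
  · intro _ hfixed
    have hvk' : v = k := congrArg (fun p => p.1.2) hfixed
    exact hkX (hvk' ▸ hvX)
  · have hX' := hX.exchange hkB hvX hvk
    have hne : v ≠ k := fun h => hkX (h ▸ hvX)
    simp [hX', hX'.subset, hXB hvX, hne, hvk]
  · have hke : k ∉ X.erase v := fun h => hkX (mem_of_mem_erase h)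
    simp only [erase_insert hke, insert_erase hvX]

theorem sum_codeword_sdiff_eq_zero {i : α} {B : Finset α} (hi : i ∉ B) (d : α → β)
    (W : β → Finset α → V) [DecidablePred (IsLeadingSet d B)] :
    ∑ X ∈ B.powerset with IsLeadingSet d B X, codeword i d W (B \ X) = 0 := by
  rw [← sum_isLeadingSet_sum_insert_eq_zero d (fun q Z => W q (insert i (B \ Z))) B]
  refine sum_congr rfl fun X _ => sum_congr rfl fun k hk => ?_
  have hik : i ≠ k := fun h => hi (h ▸ (mem_sdiff.1 hk).1)
  rw [sdiff_singleton_eq_erase, erase_insert_of_ne hik, ← sdiff_insert]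

theorem stmt_6_general {i : α} {d : α → β} {S U A : Finset α} (hi : i ∉ S)
    (W : β → Finset α → V) (hU : IsLeadingSet d S U) (hAS : A ⊆ S) (hAU : Disjoint A U) :
    codeword i d W A ∈ Submodule.span (ZMod 2)
      {v : V | ∃ A' : Finset α, A' ⊆ S ∧ #A' = #A ∧ (A' ∩ U).Nonempty ∧
        v = codeword i d W A'} := by
  classical
  have hBS : A ∪ U ⊆ S := union_subset hAS hU.subset
  have hUB : IsLeadingSet d (A ∪ U) U := hU.of_subset_of_subset subset_union_right hBS
  have hsum := sum_codeword_sdiff_eq_zero (fun h => hi (hBS h)) d W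
  rw [← add_sum_erase _ _ (mem_filter.2 ⟨mem_powerset.2 hUB.subset, hUB⟩),
    union_sdiff_cancel_right hAU] at hsum
  rw [eq_neg_of_add_eq_zero_left hsum]
  refine Submodule.neg_mem _ (Submodule.sum_mem _ fun X hX => Submodule.subset_span ?_)
  obtain ⟨hXU, hX⟩ := mem_erase.1 hX
  have hXB : IsLeadingSet d (A ∪ U) X := (mem_filter.1 hX).2
  have hcard : #((A ∪ U) \ X) = #A := by
    rw [card_sdiff_of_subset hXB.subset, card_union_of_disjoint hAU, hXB.card_eq hUB,
      Nat.add_sub_cancel]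
  exact ⟨(A ∪ U) \ X, sdiff_subset.trans hBS, hcard, hXB.sdiff_inter_nonempty hUB hXU, rfl⟩

end

/-- let `U ⊆ S = (Fin K) \ {i}` be a set of leading demanders (`d` injective
on `U` with `d(U) = d(S)`). Then every codeword `Y A = ∑_{k ∈ A} W (d k) ((A ∪ {i}) \ {k})`
with `A` a `t`-subset of `S` disjoint from `U` lies in the GF(2)-span of the codewords
`Y A'` with `A'` a `t`-subset of `S` meeting `U`. -/
theorem stmt_6 (K N t : ℕ) (hK : 2 ≤ K) (hN : 1 ≤ N) (ht : 1 ≤ t)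
    (i : Fin K) (d : Fin K → Fin N)
    (V : Type*) [AddCommGroup V] [Module (ZMod 2) V]
    (W : Fin N → Finset (Fin K) → V)
    (U : Finset (Fin K)) (hUS : U ⊆ Finset.univ.erase i)
    (hUinj : Set.InjOn d (U : Set (Fin K)))
    (hUimg : U.image d = (Finset.univ.erase i).image d)
    (A : Finset (Fin K)) (hAS : A ⊆ Finset.univ.erase i) (hAcard : A.card = t)
    (hAU : A ∩ U = ∅) :
    (∑ k ∈ A, W (d k) (insert i A \ {k})) ∈
      Submodule.span (ZMod 2)
        {v : V | ∃ A' : Finset (Fin K), A' ⊆ Finset.univ.erase i ∧ A'.card = t ∧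
          (A' ∩ U).Nonempty ∧ v = ∑ k ∈ A', W (d k) (insert i A' \ {k})} := by
  have hU : IsLeadingSet d (univ.erase i) U :=
    ⟨hUS, by simpa only [← coe_image, ← hUimg] using hUinj.bijOn_image⟩
  subst hAcard
  exact stmt_6_general (notMem_erase i univ) W hU hAS (disjoint_iff_inter_eq_empty.2 hAU)
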